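/- Let h ≥ 6 and let s be a finite-order linear automorphism of an h-dimensional complex vector space W with s ≠ id and s ≠ −id. Write the eigenvalues of s (with multiplicity) as α₁, …, α_h, and suppose they satisfy the integrality condition. Writing αᵢ = e^{2πi aᵢ} with aᵢ ∈ [0,1), the age of the induced automorphism Sym²s of Sym²W satisfies λ_{Sym²W}(s) = Σ_{1≤i≤j≤h} {aᵢ + aⱼ} > 1, where {x} denotes the fractional part of a real number x. -/

import Mathlib

open Polynomial

/-- The submodule of `W ⊗ W` generated by `x ⊗ y - y ⊗ x`. -/
noncomputable def SymKer (R M : Type*) [CommRing R] [AddCommGroup M] [Module R M] :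
    Submodule R (TensorProduct R M M) :=
  Submodule.span R {z | ∃ x y : M, z = x ⊗ₜ[R] y - y ⊗ₜ[R] x}

/-- The second symmetric power `Sym²M = (M ⊗ M)/⟨x⊗y - y⊗x⟩`. -/
abbrev SymSq (R M : Type*) [CommRing R] [AddCommGroup M] [Module R M] :=
  TensorProduct R M M ⧸ SymKer R M

/-- The automorphism `Sym²f` of `Sym²M` induced by `f : M → M`. -/
noncomputable def sym2Map {R M : Type*} [CommRing R] [AddCommGroup M] [Module R M]
    (f : M →ₗ[R] M) : SymSq R M →ₗ[R] SymSq R M :=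
  Submodule.mapQ (SymKer R M) (SymKer R M) (TensorProduct.map f f) (by
    rw [SymKer, Submodule.span_le]
    rintro z ⟨x, y, rfl⟩
    simp only [SetLike.mem_coe, Submodule.mem_comap, map_sub, TensorProduct.map_tmul]
    exact Submodule.subset_span ⟨f x, f y, rfl⟩)

/-- The age `λ(f)` of a finite-order endomorphism `f` of a finite-dimensional complex
vector space: writing the eigenvalues (roots of the characteristic polynomial, with
multiplicity) as `e^{2πi aⱼ}` with `aⱼ ∈ [0,1)`, the age is `Σⱼ aⱼ`. -/
noncomputable def age {T : Type*} [AddCommGroup T] [Module ℂ T] [Module.Finite ℂ T]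
    (f : Module.End ℂ T) : ℝ :=
  ((LinearMap.charpoly f).roots.map (fun z => Int.fract (Complex.arg z / (2 * Real.pi)))).sum

/-!
Write `e(x) = exp(2πix)`. A finite-order `s` has an eigenbasis `wᵢ`, and the products `wᵢ wⱼ` form
an eigenbasis of `Sym²W` with eigenvalues `e(aᵢ + aⱼ)`; this gives the formula for the age.

For the bound, suppose first that some `aᵢ` lie below `1/2` and others do not. If `aᵤ + aᵥ ≥ 1` for
some `aᵤ < 1/2 ≤ aᵥ`, the pairs `(u, u)` and `(v, v)` contribute `2aᵤ + (2aᵥ - 1) ≥ 1`, and any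
third index adds something positive. Otherwise each mixed pair contributes at least `1/2`, and there
are enough of them. If instead all `aᵢ` lie in the same half of `[0, 1)`, put `cᵢ = aᵢ` or
`cᵢ = aᵢ - 1/2`, so that the sum is `(h + 1) ∑ cᵢ`. Since `s ≠ ±1`, some eigenvalue is a primitive
`m`-th root of unity with `m ≥ 3`, and by integrality every primitive `m`-th root of unity or its
conjugate occurs among the eigenvalues. A suitable one makes some `cⱼ ≥ 1/6`, and `(h + 1) / 6 > 1`.
-/

section Diagonalization

lemma charpoly_eq_prod_of_apply_basis {R M ι : Type*} [CommRing R] [AddCommGroup M] [Module R M]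
    [Module.Free R M] [Module.Finite R M] [Fintype ι] {f : Module.End R M}
    (b : Module.Basis ι R M) {μ : ι → R} (hb : ∀ i, f (b i) = μ i • b i) :
    LinearMap.charpoly f = ∏ i, (X - C (μ i)) := by
  classical
  have hdiag : LinearMap.toMatrix b b f = Matrix.diagonal μ := by
    ext i j
    obtain rfl | hij := eq_or_ne i j
    · simp [LinearMap.toMatrix_apply, hb]
    · simp [LinearMap.toMatrix_apply, hb, hij]
  rw [← LinearMap.charpoly_toMatrix f b, hdiag, Matrix.charpoly_diagonal]

lemma roots_prod_univ_X_sub_C {R ι : Type*} [CommRing R] [IsDomain R] [Fintype ι] (μ : ι → R) :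
    (∏ i, (X - C (μ i))).roots = Finset.univ.val.map μ := by
  rw [← roots_multiset_prod_X_sub_C (Finset.univ.val.map μ), Multiset.map_map]
  rfl

lemma exists_equiv_of_map_univ_eq {ι κ α : Type*} [Fintype ι] [Fintype κ] {f : ι → α} {g : κ → α}
    (hfg : Finset.univ.val.map f = Finset.univ.val.map g) : ∃ σ : ι ≃ κ, ∀ i, g (σ i) = f i := by
  classical
  have hcard (c : α) : Fintype.card {i // f i = c} = Fintype.card {i // g i = c} := by
    simpa only [Multiset.count_map, Fintype.card_subtype, Finset.card_def, Finset.filter_val,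
      eq_comm] using congrArg (Multiset.count c) hfg
  exact ⟨Equiv.ofFiberEquiv fun c => Fintype.equivOfCardEq (hcard c), Equiv.ofFiberEquiv_map _⟩

variable {K V : Type*} [Field K] [AddCommGroup V] [Module K V] {f : Module.End K V}

lemma isSemisimple_of_isOfFinOrder [CharZero K] (hf : IsOfFinOrder f) : f.IsSemisimple := by
  obtain ⟨n, hn, hpow⟩ := isOfFinOrder_iff_pow_eq_one.1 hf
  refine Module.End.isSemisimple_of_squarefree_aeval_eq_zero (p := X ^ n - 1)
    (X_pow_sub_one_separable_iff.mpr (by exact_mod_cast hn.ne')).squarefree ?_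
  simp [hpow]

lemma exists_eigenbasis_of_iSup_eigenspace_eq_top (hf : ⨆ μ : K, f.eigenspace μ = ⊤) :
    ∃ (s : Set V) (b : Module.Basis s K V) (μ : s → K), ∀ i, f (b i) = μ i • b i := by
  have hspan : ⊤ ≤ Submodule.span K (⋃ μ : K, (f.eigenspace μ : Set V)) := by
    rw [← hf]
    exact iSup_le fun μ x hx => Submodule.subset_span (Set.mem_iUnion.2 ⟨μ, hx⟩)
  have hmem (i) : ∃ μ : K, f (Module.Basis.ofSpan hspan i) = μ • Module.Basis.ofSpan hspan i := by
    obtain ⟨μ, hμ⟩ := Set.mem_iUnion.1 (Module.Basis.ofSpan_subset hspan ⟨i, rfl⟩)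
    exact ⟨μ, Module.End.mem_eigenspace_iff.1 hμ⟩
  choose μ hμ using hmem
  exact ⟨_, Module.Basis.ofSpan hspan, μ, hμ⟩

lemma exists_eigenbasis_of_charpoly_eq_prod [FiniteDimensional K V] {ι : Type*} [Fintype ι]
    (hf : ⨆ μ : K, f.eigenspace μ = ⊤) {μ : ι → K}
    (hμ : LinearMap.charpoly f = ∏ i, (X - C (μ i))) :
    ∃ b : Module.Basis ι K V, ∀ i, f (b i) = μ i • b i := by
  obtain ⟨s, b, ν, hb⟩ := exists_eigenbasis_of_iSup_eigenspace_eq_top hf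
  have := Module.Finite.finite_basis b
  have := Fintype.ofFinite s
  have hroots := congrArg roots ((charpoly_eq_prod_of_apply_basis b hb).symm.trans hμ)
  rw [roots_prod_univ_X_sub_C, roots_prod_univ_X_sub_C] at hroots
  obtain ⟨σ, hσ⟩ := exists_equiv_of_map_univ_eq hroots
  refine ⟨b.reindex σ, σ.surjective.forall.2 fun i => ?_⟩
  simp [hb, hσ]

end Diagonalization

section Eigenbasis

variable {R M ι : Type*} [CommRing R] [AddCommGroup M] [Module R M] {f : Module.End R M}
  {b : Module.Basis ι R M} {μ : ι → R}

lemma isOfFinOrder_of_apply_basis [Nontrivial R] (hb : ∀ i, f (b i) = μ i • b i)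
    (hf : IsOfFinOrder f) (i : ι) : IsOfFinOrder (μ i) := by
  obtain ⟨n, hn, hpow⟩ := isOfFinOrder_iff_pow_eq_one.1 hf
  have hvec : f.HasEigenvector (μ i) (b i) :=
    Module.End.hasEigenvector_iff.2 ⟨Module.End.mem_eigenspace_iff.2 (hb i), b.ne_zero i⟩
  have hpow_smul : (μ i ^ n) • b i = (1 : R) • b i := by
    rw [← hvec.pow_apply, hpow, Module.End.one_apply, one_smul]
  exact isOfFinOrder_iff_pow_eq_one.2 ⟨n, hn, by simpa using congrArg (b.coord i) hpow_smul⟩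

lemma exists_ne_of_ne_smul_one (hb : ∀ i, f (b i) = μ i • b i) {c : R} (hf : f ≠ c • 1) :
    ∃ i, μ i ≠ c := by
  contrapose! hf
  exact b.ext fun i => by simp [hb, hf]

end Eigenbasis

section SymmetricSquare

variable {R M ι : Type*} [CommRing R] [AddCommGroup M] [Module R M]

/-- The product `x · y` in `Sym²M`, i.e. the class of `x ⊗ y`. -/
noncomputable def symMul (x y : M) : SymSq R M := (SymKer R M).mkQ (x ⊗ₜ[R] y)

lemma symMul_comm (x y : M) : (symMul x y : SymSq R M) = symMul y x :=
  (Submodule.Quotient.eq _).2 (Submodule.subset_span ⟨x, y, rfl⟩)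

lemma symMul_smul_smul (r t : R) (x y : M) :
    (symMul (r • x) (t • y) : SymSq R M) = (r * t) • symMul x y := by
  rw [symMul, TensorProduct.smul_tmul_smul, map_smul, symMul]

lemma sym2Map_symMul (f : Module.End R M) (x y : M) :
    sym2Map f (symMul x y) = symMul (f x) (f y) := rfl

lemma symSq_hom_ext {N : Type*} [AddCommGroup N] [Module R N] (b : Module.Basis ι R M)
    {f g : SymSq R M →ₗ[R] N}
    (hfg : ∀ i j, f (symMul (b i) (b j)) = g (symMul (b i) (b j))) : f = g :=
  Submodule.linearMap_qext _ <| (b.tensorProduct b).ext fun ⟨i, j⟩ => by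
    rw [Module.Basis.tensorProduct_apply]
    exact hfg i j

/-- The symmetric bilinear map sending `(b i, b j)` to the unordered pair `s(i, j)`, viewed as a
formal basis vector; it induces the coordinates on `Sym²M`. -/
noncomputable def symPairing (b : Module.Basis ι R M) : M →ₗ[R] M →ₗ[R] Sym2 ι →₀ R :=
  b.constr R fun i => b.constr R fun j => Finsupp.single s(i, j) 1

lemma symPairing_apply_basis (b : Module.Basis ι R M) (i j : ι) :
    symPairing b (b i) (b j) = Finsupp.single s(i, j) 1 := by
  simp only [symPairing, Module.Basis.constr_basis]

lemma symPairing_comm (b : Module.Basis ι R M) (x y : M) :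
    symPairing b x y = symPairing b y x := by
  have hflip : symPairing b = (symPairing b).flip := b.ext fun i => b.ext fun j => by
    simp only [LinearMap.flip_apply, symPairing_apply_basis, Sym2.eq_swap]
  exact LinearMap.congr_fun₂ hflip x y

/-- Coordinates on `Sym²M` with respect to the products of basis vectors of `M`, indexed by
unordered pairs. -/
noncomputable def symSqRepr (b : Module.Basis ι R M) : SymSq R M →ₗ[R] Sym2 ι →₀ R :=
  (SymKer R M).liftQ (TensorProduct.lift (symPairing b)) <| by
    rw [SymKer, Submodule.span_le]
    rintro _ ⟨x, y, rfl⟩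
    simpa [sub_eq_zero] using symPairing_comm b x y

lemma symSqRepr_symMul (b : Module.Basis ι R M) (i j : ι) :
    symSqRepr b (symMul (b i) (b j)) = Finsupp.single s(i, j) 1 :=
  symPairing_apply_basis b i j

/-- The basis of `Sym²M` formed by the products of basis vectors of `M`, indexed by unordered
pairs so that no order on `ι` is needed. -/
noncomputable def symSqBasis (b : Module.Basis ι R M) : Module.Basis (Sym2 ι) R (SymSq R M) :=
  .ofRepr <| .ofLinearMap (symSqRepr b)
    (Finsupp.linearCombination R <|
      Sym2.lift ⟨fun i j => symMul (b i) (b j), fun _ _ => symMul_comm _ _⟩)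
    (Finsupp.lhom_ext' fun z => LinearMap.ext_ring <| z.ind fun i j => by
      simp [symSqRepr_symMul])
    (symSq_hom_ext b fun i j => by simp [symSqRepr_symMul])

lemma symSqBasis_mk (b : Module.Basis ι R M) (i j : ι) :
    symSqBasis b s(i, j) = symMul (b i) (b j) := by
  rw [Module.Basis.apply_eq_iff]
  exact symSqRepr_symMul b i j

lemma sym2Map_apply_symSqBasis {f : Module.End R M} {b : Module.Basis ι R M} {μ : ι → R}
    (hb : ∀ i, f (b i) = μ i • b i) (z : Sym2 ι) :
    sym2Map f (symSqBasis b z) = (z.map μ).mul • symSqBasis b z := by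
  induction z with
  | h i j => simp only [symSqBasis_mk, sym2Map_symMul, hb, symMul_smul_smul, Sym2.map_mk,
      Sym2.mul_mk]

end SymmetricSquare

section ExpTwoPiI

/-- The character `e(x) = exp(2πix)`, which sends an angle in `[0, 1)` to the corresponding
eigenvalue. -/
noncomputable def expTwoPiI (x : ℝ) : ℂ := Complex.exp (2 * Real.pi * Complex.I * x)

lemma expTwoPiI_add (x y : ℝ) : expTwoPiI (x + y) = expTwoPiI x * expTwoPiI y := by
  simp only [expTwoPiI, ← Complex.exp_add, Complex.ofReal_add, mul_add]

lemma expTwoPiI_eq_expTwoPiI_iff {x y : ℝ} :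
    expTwoPiI x = expTwoPiI y ↔ ∃ n : ℤ, x - y = n := by
  rw [expTwoPiI, expTwoPiI, Complex.exp_eq_exp_iff_exists_int]
  refine exists_congr fun n => ?_
  rw [mul_comm (n : ℂ), ← mul_add, mul_right_inj' Complex.two_pi_I_ne_zero, sub_eq_iff_eq_add']
  norm_cast

lemma expTwoPiI_injOn_Ico : Set.InjOn expTwoPiI (Set.Ico 0 1) := by
  intro x hx y hy hxy
  rw [← Int.fract_eq_self.2 hx, ← Int.fract_eq_self.2 hy]
  exact Int.fract_eq_fract.2 (expTwoPiI_eq_expTwoPiI_iff.1 hxy)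

lemma expTwoPiI_zero : expTwoPiI 0 = 1 := by simp [expTwoPiI]

lemma expTwoPiI_half : expTwoPiI (1 / 2) = -1 := by
  rw [expTwoPiI, ← Complex.exp_pi_mul_I]
  congr 1
  push_cast
  ring

lemma conj_expTwoPiI (x : ℝ) : starRingEnd ℂ (expTwoPiI x) = expTwoPiI (1 - x) := by
  have hneg : starRingEnd ℂ (expTwoPiI x) = expTwoPiI (-x) := by
    simp [expTwoPiI, ← Complex.exp_conj, Complex.conj_ofNat]
  rw [hneg, expTwoPiI_eq_expTwoPiI_iff]
  exact ⟨-1, by push_cast; ring⟩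

lemma isPrimitiveRoot_expTwoPiI {k m : ℕ} (hm : m ≠ 0) (hk : k.Coprime m) :
    IsPrimitiveRoot (expTwoPiI (k / m)) m := by
  simpa [expTwoPiI] using Complex.isPrimitiveRoot_exp_of_coprime k m hm hk

lemma norm_expTwoPiI (x : ℝ) : ‖expTwoPiI x‖ = 1 := by simp [expTwoPiI, Complex.norm_exp]

lemma expTwoPiI_arg_div_two_pi {z : ℂ} (hz : ‖z‖ = 1) :
    expTwoPiI (Complex.arg z / (2 * Real.pi)) = z := by
  have hexp : expTwoPiI (Complex.arg z / (2 * Real.pi)) =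
      Complex.exp (Complex.arg z * Complex.I) := by
    rw [expTwoPiI]
    congr 1
    push_cast
    field_simp
  simpa [hexp, hz] using Complex.norm_mul_exp_arg_mul_I z

lemma fract_arg_expTwoPiI (x : ℝ) :
    Int.fract (Complex.arg (expTwoPiI x) / (2 * Real.pi)) = Int.fract x :=
  Int.fract_eq_fract.2 <| expTwoPiI_eq_expTwoPiI_iff.1 <|
    expTwoPiI_arg_div_two_pi (norm_expTwoPiI x)

end ExpTwoPiI

section Age

/-- The sum `∑_{i ≤ j} {aᵢ + aⱼ}`, which is the age of `Sym²s` when the eigenvalues of `s` are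
`e(aᵢ)`. -/
noncomputable def sym2Age {ι : Type*} [Fintype ι] [LinearOrder ι] (a : ι → ℝ) : ℝ :=
  ∑ p ∈ Finset.univ.filter (fun p : ι × ι => p.1 ≤ p.2), Int.fract (a p.1 + a p.2)

lemma age_eq_sum_of_apply_basis {V ι : Type*} [AddCommGroup V] [Module ℂ V] [Module.Finite ℂ V]
    [Fintype ι] {f : Module.End ℂ V} (b : Module.Basis ι ℂ V) {μ : ι → ℂ}
    (hb : ∀ i, f (b i) = μ i • b i) :
    age f = ∑ i, Int.fract (Complex.arg (μ i) / (2 * Real.pi)) := by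
  rw [age, charpoly_eq_prod_of_apply_basis b hb, roots_prod_univ_X_sub_C, Multiset.map_map]
  rfl

lemma age_sym2Map {W ι : Type*} [AddCommGroup W] [Module ℂ W] [FiniteDimensional ℂ W]
    [Fintype ι] [LinearOrder ι] {s : Module.End ℂ W} {b : Module.Basis ι ℂ W} {a : ι → ℝ}
    (hb : ∀ i, s (b i) = expTwoPiI (a i) • b i) :
    age (sym2Map s) = sym2Age a := by
  rw [age_eq_sum_of_apply_basis (symSqBasis b) (sym2Map_apply_symSqBasis hb),
    ← Sym2.sortEquiv.symm.sum_comp, sym2Age,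
    Finset.sum_subtype (p := fun p : ι × ι => p.1 ≤ p.2) _ (by simp)]
  refine Finset.sum_congr rfl fun p _ => ?_
  rw [← fract_arg_expTwoPiI (a p.1.1 + a p.1.2), expTwoPiI_add]
  rfl

end Age

section Integrality

/-- The integrality condition on a family `α` of complex numbers: the polynomial
`∏ᵢ (X - αᵢ)(X - conj αᵢ)` has integer coefficients. It makes the set of all `αᵢ` and their
conjugates stable under Galois conjugation. -/
def SatisfiesIntegrality {ι : Type*} [Fintype ι] (α : ι → ℂ) : Prop :=
  ∃ q : ℤ[X], q.map (Int.castRingHom ℂ) = ∏ i, (X - C (α i)) * (X - C (starRingEnd ℂ (α i)))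

lemma aeval_eq_zero_of_isPrimitiveRoot {K : Type*} [Field K] [CharZero K] {m : ℕ} (hm : 0 < m)
    {α β : K} (hα : IsPrimitiveRoot α m) (hβ : IsPrimitiveRoot β m) {q : ℤ[X]}
    (hq : aeval α q = 0) : aeval β q = 0 := by
  have hdvd : minpoly ℤ β ∣ q := by
    rw [← cyclotomic_eq_minpoly hβ hm, cyclotomic_eq_minpoly hα hm]
    exact minpoly.isIntegrallyClosed_dvd (hα.isIntegral hm) hq
  exact aeval_eq_zero_of_dvd_aeval_eq_zero hdvd (minpoly.aeval ℤ β)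

lemma SatisfiesIntegrality.exists_eq_or_eq_conj {ι : Type*} [Fintype ι] {α : ι → ℂ}
    (hα : SatisfiesIntegrality α) {m : ℕ} (hm : 0 < m) {i : ι} (hi : IsPrimitiveRoot (α i) m)
    {β : ℂ} (hβ : IsPrimitiveRoot β m) : ∃ j, β = α j ∨ β = starRingEnd ℂ (α j) := by
  obtain ⟨q, hq⟩ := hα
  have hroot (z : ℂ) : aeval z q = 0 ↔ ∃ j, z = α j ∨ z = starRingEnd ℂ (α j) := by
    rw [aeval_def, algebraMap_int_eq, ← eval_map, hq, eval_prod, Finset.prod_eq_zero_iff]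
    simp [sub_eq_zero]
  exact (hroot β).1 <| aeval_eq_zero_of_isPrimitiveRoot hm hi hβ <| (hroot _).2 ⟨i, .inl rfl⟩

lemma three_le_orderOf_of_ne_one_of_ne_neg_one {R : Type*} [CommRing R] [NoZeroDivisors R]
    {α : R} (hα : IsOfFinOrder α) (h1 : α ≠ 1) (h2 : α ≠ -1) : 3 ≤ orderOf α := by
  have hpos := hα.orderOf_pos
  have hne_one : orderOf α ≠ 1 := orderOf_eq_one_iff.not.2 h1
  have hne_two : orderOf α ≠ 2 := fun h =>
    h2 (h ▸ IsPrimitiveRoot.orderOf α).eq_neg_one_of_two_right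
  omega

lemma exists_coprime_sixth_le_lt_half {m : ℕ} (hm : 3 ≤ m) :
    ∃ k : ℕ, k.Coprime m ∧ m ≤ 6 * k ∧ 2 * k < m := by
  obtain hodd | hmod | hmod : m % 2 = 1 ∨ m % 4 = 0 ∨ m % 4 = 2 := by omega
  · obtain ⟨k, rfl⟩ : ∃ k, m = 2 * k + 1 := ⟨m / 2, by omega⟩
    exact ⟨k, by simp, by omega, by omega⟩
  · obtain ⟨k, rfl, hk⟩ : ∃ k, m = 2 * k + 2 ∧ Odd k :=
      ⟨m / 2 - 1, by omega, Nat.odd_iff.2 (by omega)⟩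
    exact ⟨k, by simpa using hk, by omega, by omega⟩
  · obtain ⟨k, rfl, hk⟩ : ∃ k, m = 2 * k + 4 ∧ Odd k :=
      ⟨m / 2 - 2, by omega, Nat.odd_iff.2 (by omega)⟩
    have hcop : k.Coprime (2 ^ 2) := (Nat.coprime_two_right.2 hk).pow_right 2
    exact ⟨k, by simpa using hcop, by omega, by omega⟩

variable {ι : Type*} [Fintype ι] {a : ι → ℝ}

lemma exists_angle_eq_or_eq_one_sub (ha : ∀ i, a i ∈ Set.Ico (0 : ℝ) 1)
    (hint : SatisfiesIntegrality fun i => expTwoPiI (a i)) {i : ι} {k m : ℕ}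
    (hi : IsPrimitiveRoot (expTwoPiI (a i)) m) (hk : k.Coprime m) (hk0 : 0 < k) (hkm : k < m) :
    ∃ j, a j = k / m ∨ a j = 1 - k / m := by
  have hm : (0 : ℝ) < m := by exact_mod_cast hk0.trans hkm
  have hpos : (0 : ℝ) < k / m := by positivity
  have hlt : (k / m : ℝ) < 1 := (div_lt_one hm).2 (by exact_mod_cast hkm)
  obtain ⟨j, hj | hj⟩ := hint.exists_eq_or_eq_conj (hk0.trans hkm) hi
    (isPrimitiveRoot_expTwoPiI (hk0.trans hkm).ne' hk)
  · exact ⟨j, .inl <| (expTwoPiI_injOn_Ico ⟨hpos.le, hlt⟩ (ha j) hj).symm⟩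
  · have hj' : expTwoPiI (1 - k / m) = expTwoPiI (a j) := by
      rw [← conj_expTwoPiI, hj, Complex.conj_conj]
    exact ⟨j, .inr <| (expTwoPiI_injOn_Ico ⟨by linarith, by linarith⟩ (ha j) hj').symm⟩

lemma exists_sixth_le_of_lt_half (ha : ∀ i, a i ∈ Set.Ico (0 : ℝ) (1 / 2))
    (hint : SatisfiesIntegrality fun i => expTwoPiI (a i)) {i : ι}
    (hfin : IsOfFinOrder (expTwoPiI (a i))) (hi : expTwoPiI (a i) ≠ 1) : ∃ j, 1 / 6 ≤ a j := by
  have ha' (i) : a i ∈ Set.Ico (0 : ℝ) 1 := ⟨(ha i).1, by linarith [(ha i).2]⟩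
  have hi' : expTwoPiI (a i) ≠ -1 := by
    rw [← expTwoPiI_half, expTwoPiI_injOn_Ico.ne_iff (ha' i) (by norm_num)]
    exact (ha i).2.ne
  have hm := three_le_orderOf_of_ne_one_of_ne_neg_one hfin hi hi'
  obtain ⟨k, hk, hk_ge, hk_lt⟩ := exists_coprime_sixth_le_lt_half hm
  obtain ⟨j, hj⟩ := exists_angle_eq_or_eq_one_sub ha' hint (.orderOf _) hk (by omega) (by omega)
  have hm_pos : (0 : ℝ) < orderOf (expTwoPiI (a i)) := by exact_mod_cast hfin.orderOf_pos
  have hge : (1 / 6 : ℝ) ≤ k / orderOf (expTwoPiI (a i)) := by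
    rw [div_le_div_iff₀ (by norm_num) hm_pos, one_mul, mul_comm]
    exact_mod_cast hk_ge
  have hlt : (k / orderOf (expTwoPiI (a i)) : ℝ) < 1 / 2 := by
    rw [div_lt_div_iff₀ hm_pos (by norm_num), one_mul, mul_comm]
    exact_mod_cast hk_lt
  exact ⟨j, hj.elim (fun h => by linarith) fun h => by linarith [(ha j).2]⟩

lemma exists_two_thirds_le_of_half_le (ha : ∀ i, a i ∈ Set.Ico (1 / 2 : ℝ) 1)
    (hint : SatisfiesIntegrality fun i => expTwoPiI (a i)) {i : ι}
    (hfin : IsOfFinOrder (expTwoPiI (a i))) (hi : expTwoPiI (a i) ≠ -1) : ∃ j, 2 / 3 ≤ a j := by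
  have ha' (i) : a i ∈ Set.Ico (0 : ℝ) 1 := ⟨by linarith [(ha i).1], (ha i).2⟩
  have hi' : expTwoPiI (a i) ≠ 1 := by
    rw [← expTwoPiI_zero, expTwoPiI_injOn_Ico.ne_iff (ha' i) (by norm_num)]
    linarith [(ha i).1]
  have hm := three_le_orderOf_of_ne_one_of_ne_neg_one hfin hi' hi
  obtain ⟨j, hj⟩ := exists_angle_eq_or_eq_one_sub ha' hint (.orderOf (expTwoPiI (a i)))
    (Nat.coprime_one_left _) one_pos (by omega)
  have hle : ((1 : ℕ) / orderOf (expTwoPiI (a i)) : ℝ) ≤ 1 / 3 := by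
    rw [Nat.cast_one]
    exact one_div_le_one_div_of_le (by norm_num) (by exact_mod_cast hm)
  exact ⟨j, hj.elim (fun h => by linarith [(ha j).1]) fun h => by linarith⟩

end Integrality

section Bound

variable {ι : Type*} [Fintype ι] [LinearOrder ι] {a : ι → ℝ}

lemma two_nsmul_sum_le_eq_sum_add_sum_diag {A : Type*} [AddCommMonoid A] {g : ι → ι → A}
    (hg : ∀ i j, g i j = g j i) :
    2 • ∑ p ∈ Finset.univ.filter (fun p : ι × ι => p.1 ≤ p.2), g p.1 p.2 =
      ∑ i, ∑ j, g i j + ∑ i, g i i := by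
  have hswap : ∑ p ∈ Finset.univ.filter (fun p : ι × ι => p.1 ≤ p.2), g p.1 p.2 =
      ∑ p ∈ Finset.univ.filter (fun p : ι × ι => p.2 ≤ p.1), g p.1 p.2 :=
    Finset.sum_equiv (Equiv.prodComm ι ι) (by simp) fun p _ => hg _ _
  have hunion : Finset.univ.filter (fun p : ι × ι => p.1 ≤ p.2) ∪
      Finset.univ.filter (fun p : ι × ι => p.2 ≤ p.1) = Finset.univ := by
    ext p
    simpa using le_total p.1 p.2
  have hinter : Finset.univ.filter (fun p : ι × ι => p.1 ≤ p.2) ∩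
      Finset.univ.filter (fun p : ι × ι => p.2 ≤ p.1) = Finset.univ.diag := by
    ext p
    simp [le_antisymm_iff]
  rw [two_nsmul]
  nth_rw 2 [hswap]
  rw [← Finset.sum_union_inter, hunion, hinter, Fintype.sum_prod_type, Finset.sum_diag]

lemma two_mul_sym2Age (a : ι → ℝ) :
    2 * sym2Age a = ∑ i, ∑ j, Int.fract (a i + a j) + ∑ i, Int.fract (a i + a i) := by
  rw [sym2Age, ← two_nsmul_sum_le_eq_sum_add_sum_diag fun i j => by rw [add_comm], two_nsmul,
    two_mul]

lemma row_add_row_add_diag_add_diag_le_two_mul_sym2Age (a : ι → ℝ) {u v : ι} (huv : u ≠ v) :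
    ∑ j, Int.fract (a u + a j) + ∑ j, Int.fract (a v + a j) +
      (Int.fract (a u + a u) + Int.fract (a v + a v)) ≤ 2 * sym2Age a := by
  rw [two_mul_sym2Age]
  exact add_le_add
    (Finset.add_le_sum (f := fun i => ∑ j, Int.fract (a i + a j))
      (fun i _ => Finset.sum_nonneg fun j _ => Int.fract_nonneg _)
      (Finset.mem_univ u) (Finset.mem_univ v) huv)
    (Finset.add_le_sum (f := fun i => Int.fract (a i + a i)) (fun i _ => Int.fract_nonneg _)
      (Finset.mem_univ u) (Finset.mem_univ v) huv)

lemma sym2Age_sub_half (a : ι → ℝ) : sym2Age (fun i => a i - 1 / 2) = sym2Age a := by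
  refine Finset.sum_congr rfl fun p _ => ?_
  rw [show a p.1 - 1 / 2 + (a p.2 - 1 / 2) = a p.1 + a p.2 - 1 by ring, Int.fract_sub_one]

lemma sym2Age_eq_card_add_one_mul_sum (ha : ∀ i, a i ∈ Set.Ico (0 : ℝ) (1 / 2)) :
    sym2Age a = (Fintype.card ι + 1) * ∑ i, a i := by
  have hfract (i j) : Int.fract (a i + a j) = a i + a j :=
    Int.fract_eq_self.2 ⟨by linarith [(ha i).1, (ha j).1], by linarith [(ha i).2, (ha j).2]⟩
  have htwo := two_mul_sym2Age a
  simp only [hfract, Finset.sum_add_distrib, Finset.sum_const, Finset.card_univ, nsmul_eq_mul,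
    ← Finset.mul_sum] at htwo
  linarith

lemma one_lt_sym2Age_of_lt_half (hcard : 6 ≤ Fintype.card ι)
    (ha : ∀ i, a i ∈ Set.Ico (0 : ℝ) (1 / 2)) {j : ι} (hj : 1 / 6 ≤ a j) : 1 < sym2Age a := by
  have hcard' : (6 : ℝ) ≤ Fintype.card ι := by exact_mod_cast hcard
  have hsum : 1 / 6 ≤ ∑ i, a i :=
    hj.trans (Finset.single_le_sum (fun i _ => (ha i).1) (Finset.mem_univ j))
  rw [sym2Age_eq_card_add_one_mul_sum ha]
  nlinarith

lemma one_lt_sym2Age_of_one_le_add (hcard : 3 ≤ Fintype.card ι) {u v : ι} (hu : a u < 1 / 2)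
    (hv : a v ∈ Set.Ico (1 / 2 : ℝ) 1) (huv : 1 ≤ a u + a v) : 1 < sym2Age a := by
  have hne : u ≠ v := by rintro rfl; linarith [hv.1]
  obtain ⟨k, hku, hkv⟩ : ∃ k, k ≠ u ∧ k ≠ v := by
    obtain ⟨k, -, hk⟩ := Finset.exists_mem_notMem_of_card_lt_card (s := {u, v}) (t := Finset.univ)
      (Finset.card_le_two.trans_lt hcard)
    exact ⟨k, by simpa using hk⟩
  have hrow (i) (hi : k ≠ i) :
      Int.fract (a i + a i) + Int.fract (a i + a k) ≤ ∑ j, Int.fract (a i + a j) :=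
    Finset.add_le_sum (f := fun j => Int.fract (a i + a j)) (fun _ _ => Int.fract_nonneg _)
      (Finset.mem_univ i) (Finset.mem_univ k) hi.symm
  have hdiag_u : Int.fract (a u + a u) = 2 * a u :=
    Int.fract_eq_iff.2 ⟨by linarith [hv.2], by linarith, 0, by push_cast; ring⟩
  have hdiag_v : Int.fract (a v + a v) = 2 * a v - 1 :=
    Int.fract_eq_iff.2 ⟨by linarith [hv.1], by linarith [hv.2], 1, by push_cast; ring⟩
  have hpos : 0 < Int.fract (a u + a k) + Int.fract (a v + a k) := by
    have hfract_ne : Int.fract (a u + a k) ≠ Int.fract (a v + a k) := by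
      intro h
      rw [Int.fract_eq_fract, add_sub_add_right_eq_sub, ← Int.fract_eq_fract,
        Int.fract_eq_self.2 ⟨by linarith [hv.2], by linarith⟩,
        Int.fract_eq_self.2 ⟨by linarith [hv.1], hv.2⟩] at h
      linarith [hv.1]
    rcases hfract_ne.lt_or_gt with h | h <;>
      linarith [Int.fract_nonneg (a u + a k), Int.fract_nonneg (a v + a k)]
  linarith [row_add_row_add_diag_add_diag_le_two_mul_sym2Age a hne, hrow u hku, hrow v hkv]

lemma one_lt_sym2Age_of_forall_add_lt_one (hcard : 5 ≤ Fintype.card ι) (ha : ∀ i, 0 ≤ a i)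
    (hcross : ∀ u v, a u < 1 / 2 → 1 / 2 ≤ a v → a u + a v < 1) {x y : ι} (hx : a x < 1 / 2)
    (hy : 1 / 2 ≤ a y) : 1 < sym2Age a := by
  have hne : x ≠ y := by rintro rfl; linarith
  have hhalf {u v} (hu : a u < 1 / 2) (hv : 1 / 2 ≤ a v) : 1 / 2 ≤ Int.fract (a u + a v) := by
    rw [Int.fract_eq_self.2 ⟨by linarith [ha u], hcross u v hu hv⟩]
    linarith [ha u]
  have hcol (j) : 1 / 2 ≤ Int.fract (a x + a j) + Int.fract (a y + a j) := by
    rcases lt_or_ge (a j) (1 / 2) with hj | hj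
    · linarith [add_comm (a y) (a j) ▸ hhalf hj hy, Int.fract_nonneg (a x + a j)]
    · linarith [hhalf hx hj, Int.fract_nonneg (a y + a j)]
  have hrows : (Fintype.card ι : ℝ) * (1 / 2) ≤
      ∑ j, Int.fract (a x + a j) + ∑ j, Int.fract (a y + a j) := by
    rw [← Finset.sum_add_distrib, ← nsmul_eq_mul]
    exact Finset.card_nsmul_le_sum _ _ _ fun j _ => hcol j
  have hcard' : (5 : ℝ) ≤ Fintype.card ι := by exact_mod_cast hcard
  linarith [row_add_row_add_diag_add_diag_le_two_mul_sym2Age a hne,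
    Int.fract_nonneg (a x + a x), Int.fract_nonneg (a y + a y)]

lemma one_lt_sym2Age_of_lt_half_of_half_le (hcard : 5 ≤ Fintype.card ι)
    (ha : ∀ i, a i ∈ Set.Ico (0 : ℝ) 1) {x y : ι} (hx : a x < 1 / 2) (hy : 1 / 2 ≤ a y) :
    1 < sym2Age a := by
  by_cases hcross : ∀ u v, a u < 1 / 2 → 1 / 2 ≤ a v → a u + a v < 1
  · exact one_lt_sym2Age_of_forall_add_lt_one hcard (fun i => (ha i).1) hcross hx hy
  · push Not at hcross
    obtain ⟨u, v, hu, hv, huv⟩ := hcross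
    exact one_lt_sym2Age_of_one_le_add (by omega) hu ⟨hv, (ha v).2⟩ huv

lemma one_lt_sym2Age (hcard : 6 ≤ Fintype.card ι) (ha : ∀ i, a i ∈ Set.Ico (0 : ℝ) 1)
    (hint : SatisfiesIntegrality fun i => expTwoPiI (a i))
    (hfin : ∀ i, IsOfFinOrder (expTwoPiI (a i))) (hne_one : ∃ i, expTwoPiI (a i) ≠ 1)
    (hne_neg_one : ∃ i, expTwoPiI (a i) ≠ -1) : 1 < sym2Age a := by
  by_cases hlow : ∀ i, a i < 1 / 2
  · have ha' (i) : a i ∈ Set.Ico (0 : ℝ) (1 / 2) := ⟨(ha i).1, hlow i⟩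
    obtain ⟨i, hi⟩ := hne_one
    obtain ⟨j, hj⟩ := exists_sixth_le_of_lt_half ha' hint (hfin i) hi
    exact one_lt_sym2Age_of_lt_half hcard ha' hj
  by_cases hhigh : ∀ i, 1 / 2 ≤ a i
  · obtain ⟨i, hi⟩ := hne_neg_one
    obtain ⟨j, hj⟩ :=
      exists_two_thirds_le_of_half_le (fun i => ⟨hhigh i, (ha i).2⟩) hint (hfin i) hi
    rw [← sym2Age_sub_half]
    exact one_lt_sym2Age_of_lt_half hcard
      (fun i => ⟨by linarith [hhigh i], by linarith [(ha i).2]⟩) (j := j) (by linarith)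
  push Not at hlow hhigh
  obtain ⟨⟨y, hy⟩, ⟨x, hx⟩⟩ := And.intro hlow hhigh
  exact one_lt_sym2Age_of_lt_half_of_half_le (by omega) ha hx hy

end Bound

/-- Let `s` be a finite-order automorphism of a `h`-dimensional (`h ≥ 6`) complex vector space `W`,
with `s ≠ ±1`, whose eigenvalues `αᵢ = e^{2πi aᵢ}` (with `aᵢ ∈ [0,1)`) satisfy the
integrality condition that `∏ᵢ (X - αᵢ)(X - α̅ᵢ)` has integer coefficients.  Then the age
of the induced automorphism `Sym²s` of `Sym²W` satisfies
`λ_{Sym²W}(s) = Σ_{i ≤ j} {aᵢ + aⱼ} > 1`. -/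
theorem age_sym2_gt_one_of_dim_ge_six
    (W : Type*) [AddCommGroup W] [Module ℂ W] [FiniteDimensional ℂ W]
    (h : ℕ) (hh : 6 ≤ h) (hW : Module.finrank ℂ W = h)
    (s : Module.End ℂ W) (n : ℕ) (hn : 0 < n) (hord : s ^ n = 1)
    (hs1 : s ≠ 1) (hs2 : s ≠ -1)
    (a : Fin h → ℝ) (ha : ∀ i, a i ∈ Set.Ico (0 : ℝ) 1)
    (heig : LinearMap.charpoly s =
      ∏ i, (X - C (Complex.exp (2 * Real.pi * Complex.I * (a i)))))
    (hint : ∃ q : Polynomial ℤ, q.map (Int.castRingHom ℂ) =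
      ∏ i, (X - C (Complex.exp (2 * Real.pi * Complex.I * (a i)))) *
        (X - C (starRingEnd ℂ (Complex.exp (2 * Real.pi * Complex.I * (a i)))))) :
    age (sym2Map s) =
      ∑ p ∈ Finset.univ.filter (fun p : Fin h × Fin h => p.1 ≤ p.2),
        Int.fract (a p.1 + a p.2) ∧
    1 < ∑ p ∈ Finset.univ.filter (fun p : Fin h × Fin h => p.1 ≤ p.2),
        Int.fract (a p.1 + a p.2) := by
  have hfin : IsOfFinOrder s := isOfFinOrder_iff_pow_eq_one.2 ⟨n, hn, hord⟩
  obtain ⟨b, hb⟩ := exists_eigenbasis_of_charpoly_eq_prod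
    (isSemisimple_of_isOfFinOrder hfin).iSup_eigenspace_eq_top heig
  exact ⟨age_sym2Map hb, one_lt_sym2Age (by simpa using hh) ha hint
    (isOfFinOrder_of_apply_basis hb hfin) (exists_ne_of_ne_smul_one hb (by simpa using hs1))
    (exists_ne_of_ne_smul_one hb (by simpa using hs2))⟩
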